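/- arXiv:1004.3264 — 5 statements merged into one kernel-verified Lean document; each statement's English description precedes it below -/
import Mathlib

section
/- Let 𝔤 be a finite-dimensional real Lie algebra with underlying vector space V, and let γ : 𝔤 → End(V) be a Lie algebra homomorphism (flat) that is torsion-free: γ(x)y − γ(y)x = [x,y] for all x, y ∈ 𝔤. Then: (1) the bracket [(x,u),(y,v)] := ([x,y], γ(x)v − γ(y)u) on 𝔤 × V satisfies the Jacobi identity and antisymmetry, making 𝔥 := 𝔤 ⋉_γ V a Lie algebra; and (2) the linear map J(x,u) := (−u, x) satisfies J ∘ J = −id and is integrable on 𝔥, i.e. [JA,JB] = [A,B] + J[JA,B] + J[A,JB] for all A, B ∈ 𝔥, and J maps 𝔤 × {0} onto {0} × V. -/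
/-- The semidirect product bracket on `𝔤 × V` along `γ : 𝔤 → End(V)` where `V`
is the underlying vector space of `𝔤`: `[(x,u),(y,v)] = ([x,y], γ(x)v − γ(y)u)`. -/
def sdBracket {𝔤 : Type*} [LieRing 𝔤] [LieAlgebra ℝ 𝔤]
    (γ : 𝔤 →ₗ[ℝ] Module.End ℝ 𝔤) (a b : 𝔤 × 𝔤) : 𝔤 × 𝔤 :=
  (⁅a.1, b.1⁆, γ a.1 b.2 - γ b.1 a.2)

/-- The almost complex structure `J(x,u) = (−u, x)` on `𝔤 × V` with `V = 𝔤`. -/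
def prodJ {𝔤 : Type*} [AddCommGroup 𝔤] (a : 𝔤 × 𝔤) : 𝔤 × 𝔤 :=
  (-a.2, a.1)

/-- If `γ : 𝔤 → End(V)` is a flat (Lie algebra homomorphism) and
torsion-free linear map on the underlying space `V` of a finite-dimensional real
Lie algebra `𝔤`, then the semidirect bracket on `𝔤 × V` is antisymmetric and
satisfies the Jacobi identity, and `J(x,u) := (−u,x)` satisfies `J² = −id`, is
integrable, and maps `𝔤 × {0}` onto `{0} × V`. -/
theorem stmt7 {𝔤 : Type*} [LieRing 𝔤] [LieAlgebra ℝ 𝔤] [FiniteDimensional ℝ 𝔤]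
    (γ : 𝔤 →ₗ[ℝ] Module.End ℝ 𝔤)
    (hflat : ∀ x y, γ ⁅x, y⁆ = γ x * γ y - γ y * γ x)
    (htf : ∀ x y, γ x y - γ y x = ⁅x, y⁆) :
    ((∀ a b, sdBracket γ a b = -sdBracket γ b a) ∧
     (∀ a b c, sdBracket γ a (sdBracket γ b c) + sdBracket γ b (sdBracket γ c a) +
       sdBracket γ c (sdBracket γ a b) = 0)) ∧
    ((∀ a : 𝔤 × 𝔤, prodJ (prodJ a) = -a) ∧
     (∀ a b, sdBracket γ (prodJ a) (prodJ b) =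
       sdBracket γ a b + prodJ (sdBracket γ (prodJ a) b) +
         prodJ (sdBracket γ a (prodJ b))) ∧
     (∀ x : 𝔤, prodJ (x, (0 : 𝔤)) = ((0 : 𝔤), x))) := by
  refine ⟨⟨?_, ?_⟩, ?_, ?_, ?_⟩
  · rintro ⟨x, u⟩ ⟨y, v⟩
    simp [sdBracket]
  · -- The first component is the Jacobi identity of `𝔤`; the second is flatness of `γ`.
    rintro ⟨x, u⟩ ⟨y, v⟩ ⟨z, w⟩
    ext
    · exact lie_jacobi x y z
    · simp only [sdBracket, Prod.snd_add, Prod.snd_zero, hflat, map_sub,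
        LinearMap.sub_apply, Module.End.mul_apply]
      abel
  · rintro ⟨x, u⟩
    simp [prodJ]
  · -- Once every bracket of `𝔤` is written through `γ` by torsion-freeness, both
    -- components are identities in the additive group.
    rintro ⟨x, u⟩ ⟨y, v⟩
    ext <;>
    · simp only [sdBracket, prodJ, Prod.fst_add, Prod.snd_add, ← htf, map_neg,
        LinearMap.neg_apply]
      abel
  · intro x
    simp [prodJ]
end

section
/- Let (𝔤, ω) be a finite-dimensional real Lie algebra with a symplectic form ω, let V be the underlying vector space of 𝔤, and let γ : 𝔤 → End(V) be torsion-free, flat, and symplectic with respect to ω. On the semidirect product 𝔥 = 𝔤 ⋉_γ V with J(x,u) := (−u,x), define Ω₁((x,u),(y,v)) := −ω(x,v) − ω(u,y) and Ω₂((x,u),(y,v)) := ω(x,y) − ω(u,v). Then Ω₁ is a closed nondegenerate alternating 2-form on 𝔥 satisfying Ω₁(JA,B) = Ω₁(A,JB) for all A, B ∈ 𝔥, both 𝔤 × {0} and {0} × V are isotropic for Ω₁, and Ω₂(A,B) = −Ω₁(JA,B) with Ω₂ closed; hence (J, Ω₁) is a special Lagrangian complex symplectic structure on 𝔥. -/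
/-- Given a symplectic Lie algebra `(𝔤, ω)` and a torsion-free flat
symplectic `γ`, on `𝔥 = 𝔤 ⋉_γ V` with `J(x,u) = (−u,x)` the forms
`Ω₁((x,u),(y,v)) = −ω(x,v) − ω(u,y)` and `Ω₂((x,u),(y,v)) = ω(x,y) − ω(u,v)`
satisfy: `Ω₁` is a closed nondegenerate alternating 2-form with
`Ω₁(JA,B) = Ω₁(A,JB)`, both `𝔤 × {0}` and `{0} × V` are isotropic for `Ω₁`, and
`Ω₂ = −Ω₁∘J` is closed; hence `(J, Ω₁)` is a special Lagrangian complex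
symplectic structure on `𝔥`. -/
theorem stmt8 {𝔤 : Type*} [LieRing 𝔤] [LieAlgebra ℝ 𝔤] [FiniteDimensional ℝ 𝔤]
    (ω : 𝔤 →ₗ[ℝ] 𝔤 →ₗ[ℝ] ℝ)
    (hωalt : ∀ x, ω x x = 0)
    (hωclosed : ∀ x y z, ω ⁅x, y⁆ z + ω ⁅y, z⁆ x + ω ⁅z, x⁆ y = 0)
    (hωnd : ∀ x, (∀ y, ω x y = 0) → x = 0)
    (γ : 𝔤 →ₗ[ℝ] Module.End ℝ 𝔤)
    (htf : ∀ x y, γ x y - γ y x = ⁅x, y⁆)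
    (hflat : ∀ x y, γ ⁅x, y⁆ = γ x * γ y - γ y * γ x)
    (hsymp : ∀ x u v, ω (γ x u) v + ω u (γ x v) = 0)
    (Ω₁ Ω₂ : (𝔤 × 𝔤) → (𝔤 × 𝔤) → ℝ)
    (hΩ₁ : ∀ a b, Ω₁ a b = -ω a.1 b.2 - ω a.2 b.1)
    (hΩ₂ : ∀ a b, Ω₂ a b = ω a.1 b.1 - ω a.2 b.2) :
    -- Ω₁ is a closed nondegenerate alternating 2-form
    (∀ a, Ω₁ a a = 0) ∧
    (∀ a b c, Ω₁ (sdBracket γ a b) c + Ω₁ (sdBracket γ b c) a +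
      Ω₁ (sdBracket γ c a) b = 0) ∧
    (∀ a, (∀ b, Ω₁ a b = 0) → a = 0) ∧
    -- Ω₁(JA,B) = Ω₁(A,JB)
    (∀ a b, Ω₁ (prodJ a) b = Ω₁ a (prodJ b)) ∧
    -- 𝔤 × {0} and {0} × V are isotropic for Ω₁
    (∀ x y : 𝔤, Ω₁ (x, 0) (y, 0) = 0) ∧
    (∀ u v : 𝔤, Ω₁ ((0 : 𝔤), u) ((0 : 𝔤), v) = 0) ∧
    -- Ω₂ = −Ω₁ ∘ J and Ω₂ is closed
    (∀ a b, Ω₂ a b = -Ω₁ (prodJ a) b) ∧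
    (∀ a b c, Ω₂ (sdBracket γ a b) c + Ω₂ (sdBracket γ b c) a +
      Ω₂ (sdBracket γ c a) b = 0) ∧
    -- hence (J, Ω₁) is special Lagrangian complex symplectic:
    -- J is an integrable almost complex structure and is totally real
    (∀ a : 𝔤 × 𝔤, prodJ (prodJ a) = -a) ∧
    (∀ a b, sdBracket γ (prodJ a) (prodJ b) =
      sdBracket γ a b + prodJ (sdBracket γ (prodJ a) b) +
        prodJ (sdBracket γ a (prodJ b))) ∧
    (∀ x : 𝔤, prodJ (x, (0 : 𝔤)) = ((0 : 𝔤), x)) ∧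
    (∀ u : 𝔤, prodJ ((0 : 𝔤), u) = (-u, (0 : 𝔤))) := by
  have hanti : ∀ x y, ω x y = -ω y x := fun x y => by
    have h := hωalt (x + y)
    simp only [map_add, LinearMap.add_apply, hωalt] at h
    linarith
  have hsym : ∀ x u v, ω (γ x u) v = ω (γ x v) u := fun x u v => by
    linarith [hsymp x u v, hanti u (γ x v)]
  refine ⟨?_, ?_, ?_, ?_, ?_, ?_, ?_, ?_, ?_, ?_, ?_, ?_⟩
  · rintro ⟨x, u⟩
    simp only [hΩ₁]
    linarith [hanti x u]
  · rintro ⟨x, u⟩ ⟨y, v⟩ ⟨z, w⟩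
    simp only [hΩ₁, sdBracket, ← htf, map_sub, LinearMap.sub_apply]
    linarith [hsym x y w, hsym x z v, hsym y x w, hsym y z u, hsym z x v, hsym z y u]
  · rintro ⟨x, u⟩ h
    have hx : x = 0 := hωnd x fun v => by simpa [hΩ₁] using h (0, v)
    have hu : u = 0 := hωnd u fun y => by simpa [hΩ₁] using h (y, 0)
    simp [hx, hu]
  · rintro ⟨x, u⟩ ⟨y, v⟩
    simp only [hΩ₁, prodJ, map_neg, LinearMap.neg_apply]
    ring
  · intro x y
    simp [hΩ₁]
  · intro u v
    simp [hΩ₁]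
  · rintro ⟨x, u⟩ ⟨y, v⟩
    simp only [hΩ₁, hΩ₂, prodJ, map_neg, LinearMap.neg_apply]
    ring
  · rintro ⟨x, u⟩ ⟨y, v⟩ ⟨z, w⟩
    simp only [hΩ₂, sdBracket, map_sub, LinearMap.sub_apply]
    linarith [hωclosed x y z, hsym x v w, hsym y u w, hsym z u v]
  · rintro ⟨x, u⟩
    simp [prodJ]
  · rintro ⟨x, u⟩ ⟨y, v⟩
    simp only [sdBracket, prodJ, ← htf, map_neg, LinearMap.neg_apply, Prod.mk_add_mk,
      Prod.mk.injEq]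
    constructor <;> abel
  · intro x
    simp [prodJ]
  · intro u
    simp [prodJ]
end

section
/- Let (𝔤, ω) be a finite-dimensional real Lie algebra with a symplectic form ω, V the underlying vector space of 𝔤, and γ : 𝔤 → End(V) torsion-free, flat and symplectic with respect to ω. On 𝔥 = 𝔤 ⋉_γ V set Ω₁((x,u),(y,v)) := −ω(x,v) − ω(u,y), and let ϖ : 𝔤 ⋉_γ V → 𝔤 ⋉_{γ*} V* be the Lie algebra isomorphism ϖ(x,u) = (x, ω(u,·)). Define on the dual semidirect product 𝔥̂ = 𝔤 ⋉_{γ*} V* the 2-form Ω̂((x,μ),(y,ν)) := ν(x) − μ(y), where x, y ∈ 𝔤 are evaluated as elements of V. Then Ω̂ is a closed nondegenerate alternating 2-form on 𝔥̂, both 𝔤 × {0} and {0} × V* are isotropic for Ω̂, and Ω̂ pulls back under ϖ to Ω₁: Ω̂(ϖ(A), ϖ(B)) = Ω₁(A,B) for all A, B ∈ 𝔥. -/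
/-- The dual semidirect product bracket on `𝔤 × V*` along the dual
representation `γ*`, where `(γ*(x)μ)(v) = −μ(γ(x)v)`. -/
def sdDualBracket {𝔤 V : Type*} [LieRing 𝔤] [LieAlgebra ℝ 𝔤]
    [AddCommGroup V] [Module ℝ V]
    (γ : 𝔤 →ₗ[ℝ] Module.End ℝ V) (a b : 𝔤 × Module.Dual ℝ V) :
    𝔤 × Module.Dual ℝ V :=
  (⁅a.1, b.1⁆, -(b.2 ∘ₗ γ a.1) + a.2 ∘ₗ γ b.1)

/-- With `(𝔤, ω)` symplectic, `γ` torsion-free flat symplectic,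
`Ω₁((x,u),(y,v)) = −ω(x,v) − ω(u,y)` on `𝔥 = 𝔤 ⋉_γ V` and
`ϖ(x,u) = (x, ω(u,·))` the Lie algebra isomorphism onto `𝔥̂ = 𝔤 ⋉_{γ*} V*`,
the 2-form `Ω̂((x,μ),(y,ν)) := ν(x) − μ(y)` on `𝔥̂` is closed, nondegenerate and
alternating, both `𝔤 × {0}` and `{0} × V*` are isotropic for `Ω̂`, and `Ω̂`
pulls back under `ϖ` to `Ω₁`. -/
theorem stmt10 {𝔤 : Type*} [LieRing 𝔤] [LieAlgebra ℝ 𝔤] [FiniteDimensional ℝ 𝔤]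
    (ω : 𝔤 →ₗ[ℝ] 𝔤 →ₗ[ℝ] ℝ)
    (hωalt : ∀ x, ω x x = 0)
    (hωclosed : ∀ x y z, ω ⁅x, y⁆ z + ω ⁅y, z⁆ x + ω ⁅z, x⁆ y = 0)
    (hωnd : ∀ x, (∀ y, ω x y = 0) → x = 0)
    (γ : 𝔤 →ₗ[ℝ] Module.End ℝ 𝔤)
    (htf : ∀ x y, γ x y - γ y x = ⁅x, y⁆)
    (hflat : ∀ x y, γ ⁅x, y⁆ = γ x * γ y - γ y * γ x)
    (hsymp : ∀ x u v, ω (γ x u) v + ω u (γ x v) = 0)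
    (Ω₁ : (𝔤 × 𝔤) → (𝔤 × 𝔤) → ℝ)
    (hΩ₁ : ∀ a b, Ω₁ a b = -ω a.1 b.2 - ω a.2 b.1)
    (ϖ : 𝔤 × 𝔤 → 𝔤 × Module.Dual ℝ 𝔤)
    (hϖ : ∀ a, ϖ a = (a.1, ω a.2))
    (Ωhat : (𝔤 × Module.Dual ℝ 𝔤) → (𝔤 × Module.Dual ℝ 𝔤) → ℝ)
    (hΩhat : ∀ a b, Ωhat a b = b.2 a.1 - a.2 b.1) :
    (∀ a, Ωhat a a = 0) ∧
    (∀ a b c, Ωhat (sdDualBracket γ a b) c + Ωhat (sdDualBracket γ b c) a +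
      Ωhat (sdDualBracket γ c a) b = 0) ∧
    (∀ a, (∀ b, Ωhat a b = 0) → a = 0) ∧
    (∀ x y : 𝔤, Ωhat (x, 0) (y, 0) = 0) ∧
    (∀ μ ν : Module.Dual ℝ 𝔤, Ωhat (0, μ) (0, ν) = 0) ∧
    (∀ a b, Ωhat (ϖ a) (ϖ b) = Ω₁ a b) := by
  refine ⟨fun a => ?_, fun a b c => ?_, fun a h => ?_, fun x y => ?_, fun μ ν => ?_,
    fun a b => ?_⟩
  · rw [hΩhat, sub_self]
  · -- Torsion-freeness turns every bracket into a difference of `γ`-terms, which cancel.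
    simp only [hΩhat, sdDualBracket, ← htf, map_sub, LinearMap.add_apply, LinearMap.neg_apply,
      LinearMap.comp_apply]
    ring
  · -- Pairing with `{0} × V*` kills the first component, pairing with `𝔤 × {0}` the second.
    refine Prod.ext ?_ ?_
    · refine (Module.forall_dual_apply_eq_zero_iff ℝ a.1).1 fun ν => ?_
      simpa [hΩhat] using h (0, ν)
    · refine LinearMap.ext fun y => ?_
      simpa [hΩhat] using h (y, 0)
  · simp [hΩhat]
  · simp [hΩhat]
  · have hskew : ω b.2 a.1 = -ω a.1 b.2 := by
      have h := hωalt (a.1 + b.2)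
      simp only [map_add, LinearMap.add_apply, hωalt] at h
      linarith
    simp only [hΩhat, hΩ₁, hϖ, hskew]
end

section
/- Let (𝔤, ω) be a finite-dimensional real Lie algebra with a nondegenerate alternating 2-form ω, V the underlying vector space of 𝔤, and γ : 𝔤 → End(V) torsion-free, flat and symplectic with respect to ω. Let J(x,u) := (−u,x) on 𝔥 = 𝔤 ⋉_γ V, let ι_ω : 𝔤 → V* be the isomorphism ι_ω(x) = ω(x,·), and let ϖ(x,u) = (x, ι_ω(u)) be the Lie algebra isomorphism onto 𝔥̂ = 𝔤 ⋉_{γ*} V*. Define Ĵ : 𝔥̂ → 𝔥̂ by Ĵ(x,μ) := (−ι_ω⁻¹(μ), ι_ω(x)). Then Ĵ ∘ ϖ = ϖ ∘ J, Ĵ ∘ Ĵ = −id, Ĵ maps 𝔤 × {0} onto {0} × V*, and Ĵ is integrable on 𝔥̂: [ĴA,ĴB] = [A,B] + Ĵ[ĴA,B] + Ĵ[A,ĴB] for all A, B ∈ 𝔥̂. -/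
/-- The map `e = ι_ω` intertwines `γ` with its dual representation: `γ*(x) (e u) = e (γ x u)`. -/
lemma dual_comp_eq {𝔤 : Type*} [LieRing 𝔤] [LieAlgebra ℝ 𝔤]
    (ω : 𝔤 →ₗ[ℝ] 𝔤 →ₗ[ℝ] ℝ) (γ : 𝔤 →ₗ[ℝ] Module.End ℝ 𝔤)
    (hsymp : ∀ x u v, ω (γ x u) v + ω u (γ x v) = 0)
    (e : 𝔤 ≃ₗ[ℝ] Module.Dual ℝ 𝔤) (he : ∀ x, e x = ω x) (x u : 𝔤) :
    (e u) ∘ₗ γ x = -e (γ x u) := by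
  ext v
  simp only [he, LinearMap.comp_apply, LinearMap.neg_apply]
  linarith [hsymp x u v]

/-- The bracket of `𝔥̂` transported along `e = ι_ω`; this is why `ϖ` is a Lie algebra morphism. -/
lemma sdDualBracket_transport {𝔤 : Type*} [LieRing 𝔤] [LieAlgebra ℝ 𝔤]
    (ω : 𝔤 →ₗ[ℝ] 𝔤 →ₗ[ℝ] ℝ) (γ : 𝔤 →ₗ[ℝ] Module.End ℝ 𝔤)
    (hsymp : ∀ x u v, ω (γ x u) v + ω u (γ x v) = 0)
    (e : 𝔤 ≃ₗ[ℝ] Module.Dual ℝ 𝔤) (he : ∀ x, e x = ω x) (x u y v : 𝔤) :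
    sdDualBracket γ (x, e u) (y, e v) = (⁅x, y⁆, e (γ x v - γ y u)) := by
  simp only [sdDualBracket, dual_comp_eq ω γ hsymp e he, map_sub]
  rw [neg_neg, ← sub_eq_add_neg]

/-- With `ω` a nondegenerate alternating 2-form on `𝔤`, `γ`
torsion-free flat symplectic, `J(x,u) = (−u,x)` on `𝔥 = 𝔤 ⋉_γ V`,
`ι_ω : 𝔤 ≃ V*` the isomorphism `x ↦ ω(x,·)` (given as the linear equivalence
`e`), and `ϖ(x,u) = (x, ι_ω u)` the Lie algebra isomorphism onto
`𝔥̂ = 𝔤 ⋉_{γ*} V*`, the map `Ĵ(x,μ) := (−ι_ω⁻¹(μ), ι_ω(x))` satisfies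
`Ĵ∘ϖ = ϖ∘J`, `Ĵ² = −id`, maps `𝔤 × {0}` onto `{0} × V*`, and is integrable
on `𝔥̂`. -/
theorem stmt11 {𝔤 : Type*} [LieRing 𝔤] [LieAlgebra ℝ 𝔤] [FiniteDimensional ℝ 𝔤]
    (ω : 𝔤 →ₗ[ℝ] 𝔤 →ₗ[ℝ] ℝ)
    (hωalt : ∀ x, ω x x = 0)
    (hωnd : ∀ x, (∀ y, ω x y = 0) → x = 0)
    (γ : 𝔤 →ₗ[ℝ] Module.End ℝ 𝔤)
    (htf : ∀ x y, γ x y - γ y x = ⁅x, y⁆)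
    (hflat : ∀ x y, γ ⁅x, y⁆ = γ x * γ y - γ y * γ x)
    (hsymp : ∀ x u v, ω (γ x u) v + ω u (γ x v) = 0)
    (e : 𝔤 ≃ₗ[ℝ] Module.Dual ℝ 𝔤)
    (he : ∀ x, e x = ω x)
    (ϖ : 𝔤 × 𝔤 → 𝔤 × Module.Dual ℝ 𝔤)
    (hϖ : ∀ a, ϖ a = (a.1, e a.2))
    (Jhat : (𝔤 × Module.Dual ℝ 𝔤) → 𝔤 × Module.Dual ℝ 𝔤)
    (hJhat : ∀ p, Jhat p = (-(e.symm p.2), e p.1)) :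
    (∀ a, Jhat (ϖ a) = ϖ (prodJ a)) ∧
    (∀ p, Jhat (Jhat p) = -p) ∧
    (∀ x : 𝔤, (Jhat (x, 0)).1 = 0) ∧
    (∀ μ : Module.Dual ℝ 𝔤, ∃ x : 𝔤, Jhat (x, 0) = (0, μ)) ∧
    (∀ a b, sdDualBracket γ (Jhat a) (Jhat b) =
      sdDualBracket γ a b + Jhat (sdDualBracket γ (Jhat a) b) +
        Jhat (sdDualBracket γ a (Jhat b))) := by
  have hJ : ∀ x u, Jhat (x, e u) = (-u, e x) := fun x u => by simp [hJhat]
  refine ⟨fun a => ?_, fun p => ?_, fun x => ?_, fun μ => ⟨e.symm μ, ?_⟩, ?_⟩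
  · rw [hϖ, hϖ, hJ]; rfl
  · ext1 <;> simp [hJhat]
  · simp [hJhat]
  · simp [hJhat]
  · rintro ⟨x, μ⟩ ⟨y, ν⟩
    obtain ⟨u, rfl⟩ := e.surjective μ
    obtain ⟨v, rfl⟩ := e.surjective ν
    simp only [hJ, sdDualBracket_transport ω γ hsymp e he, Prod.mk_add_mk, ← map_add,
      ← htf, map_neg, LinearMap.neg_apply]
    refine Prod.ext ?_ (congrArg e ?_)
    · dsimp only
      abel
    · abel
end

section
/- Let (𝔤, ω) be a finite-dimensional real Lie algebra with a symplectic form ω, V the underlying vector space of 𝔤, and γ : 𝔤 → End(V) torsion-free, flat and symplectic with respect to ω. On 𝔥 = 𝔤 ⋉_γ V define Γ_{(x,u)}(y,v) := (γ(x)y, γ(x)v) and the three 2-forms Ω₁((x,u),(y,v)) := −ω(x,v) − ω(u,y), Ω₂((x,u),(y,v)) := ω(x,y) − ω(u,v), Ω₃((x,u),(y,v)) := ω(x,y) + ω(u,v), as well as the symmetric bilinear form g((x,u),(y,v)) := −ω(x,v) + ω(u,y). Then each of Ω₁, Ω₂, Ω₃ is a closed nondegenerate alternating 2-form on 𝔥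 and is Γ-parallel: Ω_i(Γ_a b, c) + Ω_i(b, Γ_a c) = 0 for all a, b, c ∈ 𝔥 and i = 1, 2, 3; moreover g is symmetric, nondegenerate, and Γ-parallel: g(Γ_a b, c) + g(b, Γ_a c) = 0 for all a, b, c ∈ 𝔥. -/
/-- Let `(𝔤, ω)` be a symplectic Lie algebra and `γ` a
torsion-free flat symplectic connection. On `𝔥 = 𝔤 ⋉_γ V` define
`Γ_{(x,u)}(y,v) = (γ(x)y, γ(x)v)` and the forms
`Ω₁((x,u),(y,v)) = −ω(x,v) − ω(u,y)`, `Ω₂((x,u),(y,v)) = ω(x,y) − ω(u,v)`,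
`Ω₃((x,u),(y,v)) = ω(x,y) + ω(u,v)`, `g((x,u),(y,v)) = −ω(x,v) + ω(u,y)`.
Then each `Ωᵢ` is a closed nondegenerate alternating 2-form which is
`Γ`-parallel, and `g` is symmetric, nondegenerate and `Γ`-parallel. -/
theorem stmt15 {𝔤 : Type*} [LieRing 𝔤] [LieAlgebra ℝ 𝔤] [FiniteDimensional ℝ 𝔤]
    (ω : 𝔤 →ₗ[ℝ] 𝔤 →ₗ[ℝ] ℝ)
    (hωalt : ∀ x, ω x x = 0)
    (hωclosed : ∀ x y z, ω ⁅x, y⁆ z + ω ⁅y, z⁆ x + ω ⁅z, x⁆ y = 0)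
    (hωnd : ∀ x, (∀ y, ω x y = 0) → x = 0)
    (γ : 𝔤 →ₗ[ℝ] Module.End ℝ 𝔤)
    (htf : ∀ x y, γ x y - γ y x = ⁅x, y⁆)
    (hflat : ∀ x y, γ ⁅x, y⁆ = γ x * γ y - γ y * γ x)
    (hsymp : ∀ x u v, ω (γ x u) v + ω u (γ x v) = 0)
    (Γ : (𝔤 × 𝔤) → (𝔤 × 𝔤) → 𝔤 × 𝔤)
    (hΓ : ∀ a b, Γ a b = (γ a.1 b.1, γ a.1 b.2))
    (Ω₁ Ω₂ Ω₃ g : (𝔤 × 𝔤) → (𝔤 × 𝔤) → ℝ)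
    (hΩ₁ : ∀ a b, Ω₁ a b = -ω a.1 b.2 - ω a.2 b.1)
    (hΩ₂ : ∀ a b, Ω₂ a b = ω a.1 b.1 - ω a.2 b.2)
    (hΩ₃ : ∀ a b, Ω₃ a b = ω a.1 b.1 + ω a.2 b.2)
    (hg : ∀ a b, g a b = -ω a.1 b.2 + ω a.2 b.1) :
    -- each Ωᵢ is an alternating, closed, nondegenerate 2-form, parallel for Γ
    (∀ Ω' ∈ ({Ω₁, Ω₂, Ω₃} : Set ((𝔤 × 𝔤) → (𝔤 × 𝔤) → ℝ)),
      (∀ a, Ω' a a = 0) ∧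
      (∀ a b c, Ω' (sdBracket γ a b) c + Ω' (sdBracket γ b c) a +
        Ω' (sdBracket γ c a) b = 0) ∧
      (∀ a, (∀ b, Ω' a b = 0) → a = 0) ∧
      (∀ a b c, Ω' (Γ a b) c + Ω' b (Γ a c) = 0)) ∧
    -- g is symmetric, nondegenerate and Γ-parallel
    (∀ a b, g a b = g b a) ∧
    (∀ a, (∀ b, g a b = 0) → a = 0) ∧
    (∀ a b c, g (Γ a b) c + g b (Γ a c) = 0) := by
  have hsk : ∀ x y, ω x y = -ω y x := by
    intro x y
    have h := hωalt (x + y)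
    simp only [map_add, LinearMap.add_apply, hωalt] at h
    linarith
  -- `γ x` moved across `ω`, with the arguments of `ω` exchanged
  have hsw : ∀ x u v, ω (γ x u) v = ω (γ x v) u := by
    intro x u v
    linarith [hsymp x u v, hsk u (γ x v)]
  -- the terms of `dΩ₁` that contain the vector component `u`
  have hcoef : ∀ y z u, ω ⁅y, z⁆ u + ω (γ z u) y - ω (γ y u) z = 0 := by
    intro y z u
    rw [← htf, hsw z u y, hsw y u z, map_sub, LinearMap.sub_apply]
    ring
  refine ⟨?_, ?_, ?_, ?_⟩
  · intro Ω' hΩ'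
    simp only [Set.mem_insert_iff, Set.mem_singleton_iff] at hΩ'
    rcases hΩ' with rfl | rfl | rfl
    · refine ⟨?_, ?_, ?_, ?_⟩
      · rintro ⟨x, u⟩
        simp only [hΩ₁]
        linarith [hsk x u]
      · rintro ⟨x, u⟩ ⟨y, v⟩ ⟨z, w⟩
        simp only [hΩ₁, sdBracket, map_sub, LinearMap.sub_apply]
        linarith [hcoef y z u, hcoef z x v, hcoef x y w]
      · rintro ⟨x, u⟩ h
        simp only [hΩ₁] at h
        exact Prod.ext (hωnd x fun y => by simpa using h (0, y))
          (hωnd u fun y => by simpa using h (y, 0))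
      · rintro ⟨x, u⟩ ⟨y, v⟩ ⟨z, w⟩
        simp only [hΩ₁, hΓ]
        linarith [hsymp x y w, hsymp x v z]
    · refine ⟨?_, ?_, ?_, ?_⟩
      · rintro ⟨x, u⟩
        simp [hΩ₂, hωalt]
      · rintro ⟨x, u⟩ ⟨y, v⟩ ⟨z, w⟩
        simp only [hΩ₂, sdBracket, map_sub, LinearMap.sub_apply]
        linarith [hωclosed x y z, hsw x v w, hsw y w u, hsw z u v]
      · rintro ⟨x, u⟩ h
        simp only [hΩ₂] at h
        exact Prod.ext (hωnd x fun y => by simpa using h (y, 0))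
          (hωnd u fun y => by simpa using h (0, y))
      · rintro ⟨x, u⟩ ⟨y, v⟩ ⟨z, w⟩
        simp only [hΩ₂, hΓ]
        linarith [hsymp x y z, hsymp x v w]
    · refine ⟨?_, ?_, ?_, ?_⟩
      · rintro ⟨x, u⟩
        simp [hΩ₃, hωalt]
      · rintro ⟨x, u⟩ ⟨y, v⟩ ⟨z, w⟩
        simp only [hΩ₃, sdBracket, map_sub, LinearMap.sub_apply]
        linarith [hωclosed x y z, hsw x v w, hsw y w u, hsw z u v]
      · rintro ⟨x, u⟩ h
        simp only [hΩ₃] at h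
        exact Prod.ext (hωnd x fun y => by simpa using h (y, 0))
          (hωnd u fun y => by simpa using h (0, y))
      · rintro ⟨x, u⟩ ⟨y, v⟩ ⟨z, w⟩
        simp only [hΩ₃, hΓ]
        linarith [hsymp x y z, hsymp x v w]
  · rintro ⟨x, u⟩ ⟨y, v⟩
    simp only [hg]
    linarith [hsk x v, hsk u y]
  · rintro ⟨x, u⟩ h
    simp only [hg] at h
    exact Prod.ext (hωnd x fun y => by simpa using h (0, y))
      (hωnd u fun y => by simpa using h (y, 0))
  · rintro ⟨x, u⟩ ⟨y, v⟩ ⟨z, w⟩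
    simp only [hg, hΓ]
    linarith [hsymp x y w, hsymp x v z]
end
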